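/- arXiv:2603.09507 — 3 statements merged into one kernel-verified Lean document; each statement's English description precedes it below -/
import Mathlib

section
/- Let X and H be real Hilbert spaces and G and G′ real normed spaces. Let ι : H → G be an injective compact continuous linear operator, let D : H → G′ be a continuous linear operator such that ‖y‖_H² = ‖ι y‖_G² + ‖D y‖_{G′}² for all y ∈ H, and let τ : H → X be a continuous linear operator. Let E : X → H and R : H → H be continuous linear operators with τ ∘ E = id_X and τ ∘ R = 0, and let κ > 0. Then there exists ν > 0 such that ‖ι(E v + R(E v))‖_G² + κ · ‖D(E v)‖_{G′}² ≥ ν · ‖v‖_X² for all v ∈ X. -/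
/-- Lemma 3.3 (abstract form): coercivity of the second derivative of the objective
functional. Here `ι` plays the role of the compact embedding `H¹(Ω) ↪ L²(Ω)`, `D` the
gradient, `τ` the trace, `E` the harmonic extension and `R` the map `w ↦ η_w` with range
in `ker τ`. -/
theorem second_derivative_coercive
    {X : Type*} [NormedAddCommGroup X] [InnerProductSpace ℝ X] [CompleteSpace X]
    {H : Type*} [NormedAddCommGroup H] [InnerProductSpace ℝ H] [CompleteSpace H]
    {G : Type*} [NormedAddCommGroup G] [NormedSpace ℝ G]
    {G' : Type*} [NormedAddCommGroup G'] [NormedSpace ℝ G']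
    (ι : H →L[ℝ] G) (hι_inj : Function.Injective ι) (hι_cpt : IsCompactOperator ι)
    (D : H →L[ℝ] G')
    (hnorm : ∀ y : H, ‖y‖ ^ 2 = ‖ι y‖ ^ 2 + ‖D y‖ ^ 2)
    (τ : H →L[ℝ] X)
    (E : X →L[ℝ] H) (R : H →L[ℝ] H)
    (hτE : ∀ v : X, τ (E v) = v)
    (hτR : ∀ y : H, τ (R y) = 0)
    (κ : ℝ) (hκ : 0 < κ) :
    ∃ ν > 0, ∀ v : X,
      ‖ι (E v + R (E v))‖ ^ 2 + κ * ‖D (E v)‖ ^ 2 ≥ ν * ‖v‖ ^ 2 := by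
  by_contra! hcon
  have h1 : ∀ n : ℕ, ∃ v : X, ‖v‖ = 1 ∧
      ‖ι (E v + R (E v))‖ ^ 2 + κ * ‖D (E v)‖ ^ 2 ≤ 1 / ((n : ℝ) + 1) := by
    intro n
    obtain ⟨v, hv⟩ := hcon (1 / ((n : ℝ) + 1)) (by positivity)
    have hv0 : 0 < ‖v‖ := by
      rw [norm_pos_iff]
      rintro rfl
      simp at hv
    refine ⟨‖v‖⁻¹ • v, ?_, ?_⟩
    · rw [norm_smul, norm_inv, norm_norm, inv_mul_cancel₀ hv0.ne']
    · have e : ‖ι (E (‖v‖⁻¹ • v) + R (E (‖v‖⁻¹ • v)))‖ ^ 2 + κ * ‖D (E (‖v‖⁻¹ • v))‖ ^ 2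
          = (‖ι (E v + R (E v))‖ ^ 2 + κ * ‖D (E v)‖ ^ 2) / ‖v‖ ^ 2 := by
        rw [map_smul, map_smul, map_smul, ← smul_add, map_smul, norm_smul, norm_smul,
          norm_inv, norm_norm]
        field_simp
      rw [e, div_le_iff₀ (by positivity)]
      exact hv.le
  choose v hv1 hv2 using h1
  have hlim : Filter.Tendsto (fun n : ℕ => 1 / ((n : ℝ) + 1)) Filter.atTop (nhds 0) :=
    tendsto_one_div_add_atTop_nhds_zero_nat
  have hsq : ∀ f : ℕ → ℝ, Filter.Tendsto (fun n => f n ^ 2) Filter.atTop (nhds 0) →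
      Filter.Tendsto f Filter.atTop (nhds 0) := by
    intro f hf
    have := hf.sqrt
    simp only [Real.sqrt_sq_eq_abs, Real.sqrt_zero] at this
    exact (tendsto_zero_iff_abs_tendsto_zero f).2 this
  have hA : Filter.Tendsto (fun n => ι (E (v n) + R (E (v n)))) Filter.atTop (nhds 0) := by
    rw [tendsto_zero_iff_norm_tendsto_zero]
    apply hsq
    refine squeeze_zero (fun n => by positivity) (fun n => ?_) hlim
    have := hv2 n
    have : 0 ≤ κ * ‖D (E (v n))‖ ^ 2 := by positivity
    linarith
  have hB : Filter.Tendsto (fun n => D (E (v n))) Filter.atTop (nhds 0) := by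
    rw [tendsto_zero_iff_norm_tendsto_zero]
    apply hsq
    have hl : Filter.Tendsto (fun n : ℕ => κ⁻¹ * (1 / ((n : ℝ) + 1))) Filter.atTop (nhds 0) := by
      simpa using hlim.const_mul κ⁻¹
    refine squeeze_zero (fun n => by positivity) (fun n => ?_) hl
    rw [← div_eq_inv_mul, le_div_iff₀ hκ]
    have := hv2 n
    have : 0 ≤ ‖ι (E (v n) + R (E (v n)))‖ ^ 2 := by positivity
    linarith
  obtain ⟨K, hK, hsub⟩ := IsCompactOperator.image_closedBall_subset_compact
    (f := (ι : H →ₗ[ℝ] G)) hι_cpt ‖E‖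
  have hmem : ∀ n, ι (E (v n)) ∈ K := by
    intro n
    apply hsub
    refine ⟨E (v n), ?_, rfl⟩
    rw [mem_closedBall_zero_iff]
    simpa [hv1 n] using E.le_opNorm (v n)
  obtain ⟨a, -, φ, hφ, hφa⟩ := hK.tendsto_subseq hmem
  have hBφ := hB.comp hφ.tendsto_atTop
  have hAφ := hA.comp hφ.tendsto_atTop
  have hc : CauchySeq (fun n => E (v (φ n))) := by
    rw [cauchySeq_iff_tendsto_dist_atTop_0]
    have c1 := cauchySeq_iff_tendsto_dist_atTop_0.1 hφa.cauchySeq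
    have c2 := cauchySeq_iff_tendsto_dist_atTop_0.1 hBφ.cauchySeq
    have c3 := c1.add c2
    rw [add_zero] at c3
    refine squeeze_zero (fun _ => dist_nonneg) (fun p => ?_) c3
    simp only [Function.comp, dist_eq_norm, ← map_sub]
    rw [map_sub, map_sub]
    have := hnorm (E (v (φ p.1)) - E (v (φ p.2)))
    simp only [map_sub] at this ⊢
    apply (sq_le_sq₀ (by positivity) (by positivity)).1
    rw [this]
    nlinarith [mul_nonneg (norm_nonneg (ι (E (v (φ p.1))) - ι (E (v (φ p.2)))))
      (norm_nonneg (D (E (v (φ p.1))) - D (E (v (φ p.2)))))]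
  obtain ⟨w, hw⟩ := cauchySeq_tendsto_of_complete hc
  have hvw : Filter.Tendsto (fun n => v (φ n)) Filter.atTop (nhds (τ w)) := by
    have := (τ.continuous.tendsto w).comp hw
    simpa [Function.comp_def, hτE] using this
  have hn : ‖τ w‖ = 1 := by
    have := hvw.norm
    simp only [hv1] at this
    exact (tendsto_nhds_unique this tendsto_const_nhds)
  have h0 : ι (w + R w) = 0 := by
    have hcont : Continuous (fun y : H => ι (y + R y)) := by fun_prop
    exact tendsto_nhds_unique ((hcont.tendsto w).comp hw) hAφ
  have h2 : w + R w = 0 := hι_inj (by rw [h0, map_zero])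
  have h3 : τ w = 0 := by
    have := congrArg τ h2
    simpa [hτR] using this
  rw [h3] at hn
  simp at hn
end

section
/- Let X and H be real Hilbert spaces and G and G′ real normed spaces. Let ι : H → G be an injective compact continuous linear operator, let D : H → G′ be a continuous linear operator such that ‖y‖_H² = ‖ι y‖_G² + ‖D y‖_{G′}² for all y ∈ H, and let τ : H → X be a continuous linear operator. Let E : X → H and R : H → H be continuous linear operators with τ ∘ E = id_X and τ ∘ R = 0, and let κ > 0. For each n ∈ ℕ let U_n ⊆ X be a linear subspace and let E_n : X → H and R_n : H → H be continuous linear operators such that: (i) sup_n ‖E_n‖ < ∞; (ii) τ(E_n v) = v for every v ∈ U_n; (iii) ‖R_n − R‖ → 0 in operator norm as n → ∞; (iv) for every continuous linear functional g on H, the functionals g ∘ E_n converge to g ∘ E in the norm of the dual of X. Then there exist ν* > 0 and N ∈ ℕ such that for all n ≥ N and all v ∈ U_n: ‖ι(E_n v + R_n(E_n v))‖_G² + κ · ‖D(E_n v)‖_{G′}² ≥ ν* · ‖v‖_X². -/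
/-- Theorem 6.1 (abstract form): uniform coercivity of the second derivatives of the
discrete objective functionals on the discrete spaces `U_n`, with `E_n` the discrete
harmonic extensions and `R_n` the Galerkin approximations of `R`. -/
theorem discrete_second_derivative_uniformly_coercive
    {X : Type*} [NormedAddCommGroup X] [InnerProductSpace ℝ X] [CompleteSpace X]
    {H : Type*} [NormedAddCommGroup H] [InnerProductSpace ℝ H] [CompleteSpace H]
    {G : Type*} [NormedAddCommGroup G] [NormedSpace ℝ G]
    {G' : Type*} [NormedAddCommGroup G'] [NormedSpace ℝ G']
    (ι : H →L[ℝ] G) (hι_inj : Function.Injective ι) (hι_cpt : IsCompactOperator ι)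
    (D : H →L[ℝ] G')
    (hnorm : ∀ y : H, ‖y‖ ^ 2 = ‖ι y‖ ^ 2 + ‖D y‖ ^ 2)
    (τ : H →L[ℝ] X)
    (E : X →L[ℝ] H) (R : H →L[ℝ] H)
    (hτE : ∀ v : X, τ (E v) = v)
    (hτR : ∀ y : H, τ (R y) = 0)
    (κ : ℝ) (hκ : 0 < κ)
    (U : ℕ → Submodule ℝ X)
    (En : ℕ → (X →L[ℝ] H)) (Rn : ℕ → (H →L[ℝ] H))
    (hEn_bdd : ∃ M : ℝ, ∀ n : ℕ, ‖En n‖ ≤ M)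
    (hEn_trace : ∀ n : ℕ, ∀ v ∈ U n, τ (En n v) = v)
    (hRn_conv : Filter.Tendsto (fun n => ‖Rn n - R‖) Filter.atTop (nhds 0))
    (hEn_adj_conv : ∀ g : H →L[ℝ] ℝ,
      Filter.Tendsto (fun n => ‖g.comp (En n) - g.comp E‖) Filter.atTop (nhds 0)) :
    ∃ ν > 0, ∃ N : ℕ, ∀ n ≥ N, ∀ v ∈ U n,
      ‖ι (En n v + Rn n (En n v))‖ ^ 2 + κ * ‖D (En n v)‖ ^ 2 ≥ ν * ‖v‖ ^ 2 := by
  by_contra hcon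
  push Not at hcon
  have key : ∀ k : ℕ, ∃ n : ℕ, k ≤ n ∧ ∃ w ∈ U n, ‖w‖ = 1 ∧
      ‖ι (En n w + Rn n (En n w))‖ ^ 2 + κ * ‖D (En n w)‖ ^ 2 < 1 / ((k : ℝ) + 1) := by
    intro k
    obtain ⟨n, hn, v, hv, hlt⟩ := hcon (1 / ((k : ℝ) + 1)) (by positivity) k
    have hv0 : 0 < ‖v‖ := by
      rcases (norm_nonneg v).eq_or_lt with h | h
      · rw [← h] at hlt
        have : 0 ≤ ‖ι (En n v + Rn n (En n v))‖ ^ 2 + κ * ‖D (En n v)‖ ^ 2 := by positivity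
        rw [zero_pow two_ne_zero, mul_zero] at hlt
        linarith
      · exact h
    refine ⟨n, hn, ‖v‖⁻¹ • v, (U n).smul_mem _ hv, ?_, ?_⟩
    · rw [norm_smul, norm_inv, norm_norm, inv_mul_cancel₀ hv0.ne']
    · simp only [map_smul, ← smul_add, norm_smul, norm_inv, norm_norm, mul_pow]
      have h2 : 0 < (‖v‖⁻¹) ^ 2 := by positivity
      have h3 := mul_lt_mul_of_pos_left hlt h2
      have h4 : ‖v‖⁻¹ ^ 2 * (1 / ((k : ℝ) + 1) * ‖v‖ ^ 2) = 1 / ((k : ℝ) + 1) := by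
        field_simp
      rw [h4] at h3
      linarith
  choose n hn w hwU hw1 hlt using key
  obtain ⟨M, hM⟩ := hEn_bdd
  set y : ℕ → H := fun k => En (n k) (w k) with hy
  have hyM : ∀ k, ‖y k‖ ≤ M := fun k => by
    have := (En (n k)).le_opNorm (w k)
    rw [hw1, mul_one] at this
    exact this.trans (hM _)
  have h1k : Filter.Tendsto (fun k : ℕ => 1 / ((k : ℝ) + 1)) Filter.atTop (nhds 0) :=
    tendsto_one_div_add_atTop_nhds_zero_nat
  have sq0 : ∀ {F : Type _} [NormedAddCommGroup F] (a : ℕ → F),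
      Filter.Tendsto (fun k => ‖a k‖ ^ 2) Filter.atTop (nhds 0) →
      Filter.Tendsto a Filter.atTop (nhds 0) := by
    intro F _ a h
    rw [tendsto_zero_iff_norm_tendsto_zero]
    have := h.sqrt
    simpa [Real.sqrt_sq (norm_nonneg _)] using this
  have sq1 : ∀ (a : ℕ → G'),
      Filter.Tendsto (fun k => ‖a k‖ ^ 2) Filter.atTop (nhds 0) →
      Filter.Tendsto a Filter.atTop (nhds 0) := by
    intro a h
    rw [tendsto_zero_iff_norm_tendsto_zero]
    have := h.sqrt
    simpa [Real.sqrt_sq (norm_nonneg _)] using this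
  have hD : Filter.Tendsto (fun k => D (y k)) Filter.atTop (nhds 0) := by
    apply sq1
    have h5 : Filter.Tendsto (fun k : ℕ => κ⁻¹ * (1 / ((k : ℝ) + 1))) Filter.atTop (nhds 0) := by
      simpa using h1k.const_mul κ⁻¹
    refine squeeze_zero (fun k => by positivity) (fun k => ?_) h5
    rw [le_inv_mul_iff₀ hκ]
    have := hlt k
    have : 0 ≤ ‖ι (En (n k) (w k) + Rn (n k) (En (n k) (w k)))‖ ^ 2 := by positivity
    simp only [hy]
    linarith
  have hI : Filter.Tendsto (fun k => ι (y k + Rn (n k) (y k))) Filter.atTop (nhds 0) := by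
    apply sq0
    refine squeeze_zero (fun k => by positivity) (fun k => ?_) h1k
    have := hlt k
    have : 0 ≤ κ * ‖D (En (n k) (w k))‖ ^ 2 := by positivity
    simp only [hy]
    linarith
  obtain ⟨K, hK, hKsub⟩ := IsCompactOperator.image_closedBall_subset_compact (f := (ι : H →ₗ[ℝ] G)) hι_cpt M
  obtain ⟨g, -, φ, hφ, hg⟩ := hK.tendsto_subseq (x := fun k => ι (y k))
    (fun k => hKsub ⟨y k, by simpa using hyM k, rfl⟩)
  have hDφ := hD.comp hφ.tendsto_atTop
  have hcau : CauchySeq (y ∘ φ) := by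
    have c1 := hg.cauchySeq
    have c2 := hDφ.cauchySeq
    rw [Metric.cauchySeq_iff] at c1 c2 ⊢
    intro ε hε
    obtain ⟨N1, h1⟩ := c1 (ε / 2) (by positivity)
    obtain ⟨N2, h2⟩ := c2 (ε / 2) (by positivity)
    refine ⟨max N1 N2, fun a ha b hb => ?_⟩
    have e1 := h1 a (le_of_max_le_left ha) b (le_of_max_le_left hb)
    have e2 := h2 a (le_of_max_le_right ha) b (le_of_max_le_right hb)
    simp only [Function.comp, dist_eq_norm, ← map_sub] at e1 e2 ⊢
    have e3 := hnorm (y (φ a) - y (φ b))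
    have p1 := norm_nonneg (ι (y (φ a) - y (φ b)))
    have p2 := norm_nonneg (D (y (φ a) - y (φ b)))
    refine lt_of_pow_lt_pow_left₀ 2 hε.le ?_
    nlinarith
  obtain ⟨z, hz⟩ := cauchySeq_tendsto_of_complete hcau
  have hnφ : Filter.Tendsto (fun k => n (φ k)) Filter.atTop Filter.atTop :=
    Filter.tendsto_atTop_mono (fun k => hn (φ k)) hφ.tendsto_atTop
  have hR : Filter.Tendsto (fun k => Rn (n (φ k)) (y (φ k))) Filter.atTop (nhds (R z)) := by
    have r1 : Filter.Tendsto (fun k => Rn (n (φ k))) Filter.atTop (nhds R) :=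
      (tendsto_iff_norm_sub_tendsto_zero.2 hRn_conv).comp hnφ
    exact ((isBoundedBilinearMap_apply (𝕜 := ℝ) (E := H) (F := H)).continuous.tendsto (R, z)).comp
      (r1.prodMk_nhds hz)
  have hz0 : ι (z + R z) = 0 :=
    tendsto_nhds_unique ((ι.continuous.tendsto _).comp (hz.add hR)) (hI.comp hφ.tendsto_atTop)
  have hz1 : z + R z = 0 := hι_inj (by rw [hz0, map_zero])
  have hτz : τ z = 0 := by
    have := congrArg τ hz1
    simpa [hτR] using this
  have hw : Filter.Tendsto (fun k => ‖w (φ k)‖) Filter.atTop (nhds ‖τ z‖) := by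
    have := ((τ.continuous.tendsto _).comp hz).norm
    refine this.congr fun k => ?_
    simp only [Function.comp, hy]
    rw [hEn_trace _ _ (hwU _)]
  simp only [hw1, hτz, norm_zero] at hw
  exact one_ne_zero (tendsto_nhds_unique tendsto_const_nhds hw)
end

section
/- Let V be a real normed vector space and U ⊆ V a linear subspace. Let T and T_h be continuous bilinear forms on V, let w and w_h be continuous linear functionals on V, and let ν* > 0. Let ū ∈ V, ū_h ∈ U and u*_h ∈ U satisfy: T(ū, v) = w(v) for all v ∈ V; T_h(ū_h, v) = w_h(v) for all v ∈ U; T(u*_h, v) = w(v) for all v ∈ U; and T_h(v, v) ≥ ν* · ‖v‖² for all v ∈ U. Then ν* · ‖u*_h − ū_h‖² ≤ (T_h − T)(ū, u*_h − ū_h) + (w − w_h)(u*_h − ū_h) + (T_h − T)(u*_h − ū, u*_h − ū_h). -/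
/-- Lemma 6.6 of the paper (the general estimate): with `T`, `T_h` the continuous and
discrete bilinear forms, `w`, `w_h` the corresponding right-hand sides, `ū` the continuous
optimal control, `ū_h` the discrete one and `u*_h` the finite element solution of the
continuous optimality system in `U`, uniform discrete coercivity yields the basic error
splitting. -/
theorem general_error_estimate
    {V : Type*} [NormedAddCommGroup V] [NormedSpace ℝ V]
    (U : Submodule ℝ V)
    (T Th : V →L[ℝ] V →L[ℝ] ℝ)
    (w wh : V →L[ℝ] ℝ)
    (νstar : ℝ) (hνstar : 0 < νstar)
    (ubar ubarh ustarh : V)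
    (hubarh_mem : ubarh ∈ U) (hustarh_mem : ustarh ∈ U)
    (hubar : ∀ v : V, T ubar v = w v)
    (hubarh : ∀ v ∈ U, Th ubarh v = wh v)
    (hustarh : ∀ v ∈ U, T ustarh v = w v)
    (hcoer : ∀ v ∈ U, Th v v ≥ νstar * ‖v‖ ^ 2) :
    νstar * ‖ustarh - ubarh‖ ^ 2 ≤
      (Th ubar (ustarh - ubarh) - T ubar (ustarh - ubarh))
      + (w (ustarh - ubarh) - wh (ustarh - ubarh))
      + (Th (ustarh - ubar) (ustarh - ubarh) - T (ustarh - ubar) (ustarh - ubarh)) := by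
  have he : ustarh - ubarh ∈ U := U.sub_mem hustarh_mem hubarh_mem
  have h1 := hubarh _ he
  have h2 := hustarh _ he
  have h3 := hcoer _ he
  have h4 : ∀ (B : V →L[ℝ] V →L[ℝ] ℝ) (a b e : V), B (a - b) e = B a e - B b e := by
    intro B a b e
    rw [map_sub, ContinuousLinearMap.sub_apply]
  have h5 := h4 Th ustarh ubarh (ustarh - ubarh)
  have h6 := h4 Th ustarh ubar (ustarh - ubarh)
  have h7 := h4 T ustarh ubar (ustarh - ubarh)
  linarith
end
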